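/- For every k ≥ 1 and n = 2k, there exists a matrix B ∈ GL(n, ℤ) such that every complex eigenvalue r of B satisfies |log |r|| < 2/n and at least one eigenvalue of B has absolute value different from 1; consequently, the semidirect product group ℤⁿ ⋊_B ℤ (with operation (v, a)·(w, b) = (v + Bᵃ·w, a + b)) contains no nilpotent subgroup of finite index. -/

import Mathlib

open Matrix

/-- The semidirect product `ℤⁿ ⋊_B ℤ` for `B ∈ GL(n, ℤ)`, with underlying set `ℤⁿ × ℤ`
and operation `(v, a)·(w, b) = (v + Bᵃ·w, a + b)`. -/
def LatGrp (n : ℕ) (_B : Matrix.GeneralLinearGroup (Fin n) ℤ) : Type := (Fin n → ℤ) × ℤ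

namespace LatGrp

variable {n : ℕ}

instance (n : ℕ) (B : Matrix.GeneralLinearGroup (Fin n) ℤ) : Group (LatGrp n B) where
  mul g h := (g.1 + ((B ^ g.2 : Matrix.GeneralLinearGroup (Fin n) ℤ) :
      Matrix (Fin n) (Fin n) ℤ).mulVec h.1, g.2 + h.2)
  one := ((0 : Fin n → ℤ), (0 : ℤ))
  inv g := (-((B ^ (-g.2) : Matrix.GeneralLinearGroup (Fin n) ℤ) :
      Matrix (Fin n) (Fin n) ℤ).mulVec g.1, -g.2)
  mul_assoc a b c := by
    show ((a.1 + ((B ^ a.2 : Matrix.GeneralLinearGroup (Fin n) ℤ) :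
            Matrix (Fin n) (Fin n) ℤ).mulVec b.1)
          + ((B ^ (a.2 + b.2) : Matrix.GeneralLinearGroup (Fin n) ℤ) :
            Matrix (Fin n) (Fin n) ℤ).mulVec c.1, (a.2 + b.2) + c.2)
        = (a.1 + ((B ^ a.2 : Matrix.GeneralLinearGroup (Fin n) ℤ) :
            Matrix (Fin n) (Fin n) ℤ).mulVec
            (b.1 + ((B ^ b.2 : Matrix.GeneralLinearGroup (Fin n) ℤ) :
              Matrix (Fin n) (Fin n) ℤ).mulVec c.1), a.2 + (b.2 + c.2))
    rw [_root_.zpow_add, Units.val_mul, Matrix.mulVec_add, Matrix.mulVec_mulVec, add_assoc, add_assoc]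
  one_mul a := by
    show ((0 : Fin n → ℤ) + ((B ^ (0:ℤ) : Matrix.GeneralLinearGroup (Fin n) ℤ) :
        Matrix (Fin n) (Fin n) ℤ).mulVec a.1, (0:ℤ) + a.2) = a
    simp
    rfl
  mul_one a := by
    show (a.1 + ((B ^ a.2 : Matrix.GeneralLinearGroup (Fin n) ℤ) :
        Matrix (Fin n) (Fin n) ℤ).mulVec 0, a.2 + 0) = a
    simp
    rfl
  inv_mul_cancel a := by
    show (-((B ^ (-a.2) : Matrix.GeneralLinearGroup (Fin n) ℤ) :
          Matrix (Fin n) (Fin n) ℤ).mulVec a.1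
        + ((B ^ (-a.2) : Matrix.GeneralLinearGroup (Fin n) ℤ) :
          Matrix (Fin n) (Fin n) ℤ).mulVec a.1, -a.2 + a.2)
        = ((0 : Fin n → ℤ), (0 : ℤ))
    simp

end LatGrp

/-!
Take for `B` an integer matrix with characteristic polynomial `X ^ (2 * k) - X ^ k - 1`; its
constant coefficient is a unit, so `B` is invertible over `ℤ`. If `r` is an eigenvalue, then
`r ^ k` solves `z ^ 2 = z + 1`, so `k * |log |r|| = log φ` with `0 < log φ < 1`.

If `ℤⁿ ⋊_B ℤ` had a nilpotent subgroup `H` of finite index, then `H` would contain some `(0, m)`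
with `m > 0` and a positive power of every `(v, 0)`. Commutation with `(0, m)` acts on `ℤⁿ` as
`B ^ m - 1`, so this matrix would be nilpotent and every eigenvalue of `B` would be an `m`-th root
of unity.
-/

open Polynomial Real goldenRatio

section Charpoly

variable {R : Type*} [CommRing R]

lemma exists_matrix_charpoly_eq {f : R[X]} (hf : f.Monic) :
    ∃ M : Matrix (Fin f.natDegree) (Fin f.natDegree) R, M.charpoly = f := by
  nontriviality R
  let b := AdjoinRoot.powerBasisAux' hf
  let M := Algebra.leftMulMatrix b (AdjoinRoot.root f)
  have hroot : aeval (AdjoinRoot.root f) M.charpoly = 0 := by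
    apply Algebra.leftMulMatrix_injective b
    rw [map_zero, ← aeval_algHom_apply]
    exact M.aeval_self_charpoly
  have hdvd : f ∣ M.charpoly := by
    rwa [← AdjoinRoot.mk_eq_zero, ← AdjoinRoot.aeval_eq]
  have hdegree : M.charpoly.natDegree ≤ f.natDegree := by
    rw [charpoly_natDegree_eq_dim, Fintype.card_fin]
  exact ⟨M, eq_of_monic_of_dvd_of_natDegree_le hf M.charpoly_monic hdvd hdegree⟩

lemma exists_generalLinearGroup_charpoly_eq {f : R[X]} (hf : f.Monic) (h0 : IsUnit (f.coeff 0)) :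
    ∃ B : GL (Fin f.natDegree) R, B.val.charpoly = f := by
  obtain ⟨M, hM⟩ := exists_matrix_charpoly_eq hf
  have hdet : IsUnit M.det := by
    rw [det_eq_sign_charpoly_coeff, hM]
    exact (isUnit_one.neg.pow _).mul h0
  exact ⟨.mk'' M hdet, hM⟩

variable (R) in
lemma exists_generalLinearGroup_charpoly_eq_X_pow_two_mul_sub {k : ℕ} (hk : k ≠ 0) :
    ∃ B : GL (Fin (2 * k)) R, B.val.charpoly = X ^ (2 * k) - (X ^ k + 1) := by
  nontriviality R
  have hlt : (X ^ k + 1 : R[X]).degree < (2 * k : ℕ) := by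
    rw [← C_1, degree_X_pow_add_C (Nat.pos_of_ne_zero hk), Nat.cast_lt]
    lia
  have hmonic : (X ^ (2 * k) - (X ^ k + 1) : R[X]).Monic := monic_X_pow_sub hlt
  have hdegree : (X ^ (2 * k) - (X ^ k + 1) : R[X]).natDegree = 2 * k := by
    apply natDegree_eq_of_degree_eq_some
    rw [degree_sub_eq_left_of_degree_lt (by rwa [degree_X_pow]), degree_X_pow]
  have hcoeff : IsUnit ((X ^ (2 * k) - (X ^ k + 1) : R[X]).coeff 0) := by
    simp [coeff_zero_eq_eval_zero, hk]
  have hexists := exists_generalLinearGroup_charpoly_eq hmonic hcoeff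
  rwa [hdegree] at hexists

end Charpoly

lemma pow_eq_one_of_isNilpotent_of_mem_spectrum {K A : Type*} [Field K] [Ring A] [Algebra K A]
    {a : A} {m : ℕ} (ha : IsNilpotent (a ^ m - 1)) {r : K} (hr : r ∈ spectrum K a) :
    r ^ m = 1 := by
  by_contra hne
  have hunit : IsUnit (algebraMap K A (r ^ m - 1) - (a ^ m - 1)) := by
    rw [sub_eq_add_neg]
    exact ha.neg.isUnit_add_left_of_commute
      ((IsUnit.mk0 _ (sub_ne_zero.mpr hne)).map (algebraMap K A)) (Algebra.commutes _ _).symm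
  refine spectrum.mem_iff.mp (spectrum.pow_mem_pow a m hr) ?_
  simpa using hunit

section GoldenRatio

lemma eq_goldenRatio_or_eq_goldenConj {z : ℂ} (hz : z ^ 2 = z + 1) :
    z = (φ : ℂ) ∨ z = (ψ : ℂ) := by
  have hadd : (φ : ℂ) + ψ = 1 := mod_cast goldenRatio_add_goldenConj
  have hmul : (φ : ℂ) * ψ = -1 := mod_cast goldenRatio_mul_goldenConj
  have hfactor : (z - φ) * (z - ψ) = 0 := by linear_combination hz - z * hadd + hmul
  simpa only [mul_eq_zero, sub_eq_zero] using hfactor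

lemma log_goldenRatio_pos : 0 < log φ := log_pos one_lt_goldenRatio

lemma log_goldenRatio_lt_one : log φ < 1 := by
  rw [log_lt_iff_lt_exp goldenRatio_pos]
  exact goldenRatio_lt_two.trans exp_one_gt_two

lemma log_goldenConj : log ψ = -log φ := by
  rw [← log_inv, inv_goldenRatio, log_neg_eq_log]

lemma abs_log_norm_eq_log_goldenRatio {z : ℂ} (hz : z ^ 2 = z + 1) : |log ‖z‖| = log φ := by
  rcases eq_goldenRatio_or_eq_goldenConj hz with rfl | rfl
  · rw [Complex.norm_real, norm_eq_abs, log_abs, abs_of_pos log_goldenRatio_pos]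
  · rw [Complex.norm_real, norm_eq_abs, log_abs, log_goldenConj, abs_neg,
      abs_of_pos log_goldenRatio_pos]

variable {k : ℕ} {r : ℂ}

lemma mul_abs_log_norm_eq_log_goldenRatio (hr : r ^ (2 * k) = r ^ k + 1) :
    k * |log ‖r‖| = log φ := by
  have hsq : (r ^ k) ^ 2 = r ^ k + 1 := by rw [← hr, pow_mul']
  rw [← abs_log_norm_eq_log_goldenRatio hsq, norm_pow, log_pow, abs_mul, Nat.abs_cast]

lemma abs_log_norm_lt_one_div (hk : k ≠ 0) (hr : r ^ (2 * k) = r ^ k + 1) :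
    |log ‖r‖| < 1 / k := by
  rw [lt_div_iff₀' (by positivity), mul_abs_log_norm_eq_log_goldenRatio hr]
  exact log_goldenRatio_lt_one

lemma norm_ne_one_of_pow_two_mul_eq_pow_add_one (hr : r ^ (2 * k) = r ^ k + 1) : ‖r‖ ≠ 1 := by
  intro hnorm
  have hlog := mul_abs_log_norm_eq_log_goldenRatio hr
  rw [hnorm, log_one, abs_zero, mul_zero] at hlog
  exact log_goldenRatio_pos.ne hlog

end GoldenRatio

namespace LatGrp

open Multiplicative
open scoped commutatorElement

variable {n : ℕ} (B : GL (Fin n) ℤ)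

/-- The inclusion `v ↦ (v, 0)` of the normal subgroup `ℤⁿ` into `ℤⁿ ⋊_B ℤ`, as a homomorphism from
`ℤⁿ` written multiplicatively, so that `(v, 0) ^ d = (d • v, 0)` is `map_pow`. -/
def translation : Multiplicative (Fin n → ℤ) →* LatGrp n B where
  toFun v := (v.toAdd, (0 : ℤ))
  map_one' := rfl
  map_mul' v w := Prod.ext (by change _ = _ + ((B ^ (0 : ℤ)).val *ᵥ w.toAdd); simp) rfl

/-- The inclusion `a ↦ (0, a)` of the acting group `ℤ` into `ℤⁿ ⋊_B ℤ`, as a homomorphism from `ℤ`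
written multiplicatively. Conjugation by `(0, a)` is the action of `B ^ a` on `ℤⁿ`. -/
def shift : Multiplicative ℤ →* LatGrp n B where
  toFun a := ((0 : Fin n → ℤ), a.toAdd)
  map_one' := rfl
  map_mul' a b := Prod.ext (by change 0 = 0 + ((B ^ a.toAdd).val *ᵥ 0); simp) rfl

lemma translation_injective : Function.Injective (translation B) :=
  fun _ _ h => congrArg Prod.fst h

lemma shift_mul_translation (a : ℤ) (v : Fin n → ℤ) :
    shift B (ofAdd a) * translation B (ofAdd v) =
      translation B (ofAdd ((B ^ a).val *ᵥ v)) * shift B (ofAdd a) := by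
  refine Prod.ext ?_ ?_
  · change 0 + (B ^ a).val *ᵥ v = (B ^ a).val *ᵥ v + (B ^ (0 : ℤ)).val *ᵥ 0
    simp
  · exact add_comm a 0

lemma commutator_shift_translation (m : ℕ) (v : Fin n → ℤ) :
    ⁅shift B (ofAdd (m : ℤ)), translation B (ofAdd v)⁆ =
      translation B (ofAdd ((B.val ^ m - 1) *ᵥ v)) := by
  rw [commutatorElement_def, shift_mul_translation, mul_inv_cancel_right, zpow_natCast,
    Units.val_pow_eq_pow_val, sub_mulVec, one_mulVec, ofAdd_sub, _root_.map_div, div_eq_mul_inv]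

variable {B} {H : Subgroup (LatGrp n B)}

lemma translation_mem_lowerCentralSeries {m : ℕ} (hm : shift B (ofAdd (m : ℤ)) ∈ H)
    {v : Fin n → ℤ} (hv : translation B (ofAdd v) ∈ H) (j : ℕ) :
    translation B (ofAdd ((B.val ^ m - 1) ^ j *ᵥ v)) ∈ H.lowerCentralSeries j := by
  induction j with
  | zero => simpa using hv
  | succ j ih =>
    rw [pow_succ', ← mulVec_mulVec, ← commutator_shift_translation,
      Subgroup.lowerCentralSeries_succ, Subgroup.commutator_comm]
    exact Subgroup.commutator_mem_commutator hm ih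

variable (H) in
lemma exists_shift_mem [H.FiniteIndex] : ∃ m : ℕ, m ≠ 0 ∧ shift B (ofAdd (m : ℤ)) ∈ H := by
  obtain ⟨m, hm, -, hmem⟩ := Subgroup.exists_pow_mem_of_index_ne_zero
    (Subgroup.FiniteIndex.index_ne_zero (H := H)) (shift B (ofAdd 1))
  refine ⟨m, hm.ne', ?_⟩
  rwa [← map_pow, ← ofAdd_nsmul, nsmul_one] at hmem

variable (H) in
lemma exists_nsmul_translation_mem [H.FiniteIndex] (v : Fin n → ℤ) :
    ∃ d : ℕ, d ≠ 0 ∧ translation B (ofAdd (d • v)) ∈ H := by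
  obtain ⟨d, hd, -, hmem⟩ := Subgroup.exists_pow_mem_of_index_ne_zero
    (Subgroup.FiniteIndex.index_ne_zero (H := H)) (translation B (ofAdd v))
  exact ⟨d, hd.ne', by rwa [← map_pow, ← ofAdd_nsmul] at hmem⟩

lemma exists_isNilpotent_pow_sub_one (hB : Group.IsVirtuallyNilpotent (LatGrp n B)) :
    ∃ m : ℕ, m ≠ 0 ∧ IsNilpotent (B.val ^ m - 1) := by
  obtain ⟨H, hnilpotent, hfinite⟩ := hB
  obtain ⟨m, hm, hshift⟩ := exists_shift_mem H
  obtain ⟨j, hj⟩ := (Subgroup.isNilpotent_iff_lowerCentralSeries H).mp hnilpotent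
  refine ⟨m, hm, j, ext_of_mulVec_single fun i => ?_⟩
  obtain ⟨d, hd, hmem⟩ := exists_nsmul_translation_mem H (Pi.single i 1)
  have hbot := translation_mem_lowerCentralSeries hshift hmem j
  rw [hj, Subgroup.mem_bot, map_eq_one_iff _ (translation_injective B), ofAdd_eq_one,
    mulVec_smul] at hbot
  rw [zero_mulVec]
  exact (smul_eq_zero.mp hbot).resolve_left hd

lemma norm_eq_one_of_isVirtuallyNilpotent (hB : Group.IsVirtuallyNilpotent (LatGrp n B)) {r : ℂ}
    (hr : (B.val.map (Int.cast : ℤ → ℂ)).charpoly.IsRoot r) : ‖r‖ = 1 := by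
  obtain ⟨m, hm, hnilpotent⟩ := exists_isNilpotent_pow_sub_one hB
  have hcomplex : IsNilpotent (B.val.map (Int.cast : ℤ → ℂ) ^ m - 1) := by
    have hmap := hnilpotent.map (Int.castRingHom ℂ).mapMatrix
    rwa [map_sub, map_pow, map_one] at hmap
  have hpow : r ^ m = 1 :=
    pow_eq_one_of_isNilpotent_of_mem_spectrum hcomplex (mem_spectrum_of_isRoot_charpoly hr)
  exact Complex.norm_eq_one_of_pow_eq_one hpow hm

end LatGrp

/-- For every `n = 2k`, there exists `B ∈ GL(n, ℤ)` all of whose complex eigenvalues `r`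
satisfy `|log |r|| < 2/n`, with at least one eigenvalue of absolute value different from `1`;
consequently the semidirect product `ℤⁿ ⋊_B ℤ` contains no nilpotent subgroup of finite
index. -/
theorem stmt14 (k : ℕ) (hk : 1 ≤ k) (n : ℕ) (hn : n = 2 * k) :
    ∃ B : Matrix.GeneralLinearGroup (Fin n) ℤ,
      (∀ r : ℂ, (((B : Matrix (Fin n) (Fin n) ℤ).map (Int.cast : ℤ → ℂ)).charpoly).IsRoot r →
        |Real.log ‖r‖| < 2 / (n : ℝ)) ∧
      (∃ r : ℂ, (((B : Matrix (Fin n) (Fin n) ℤ).map (Int.cast : ℤ → ℂ)).charpoly).IsRoot r ∧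
        ‖r‖ ≠ 1) ∧
      ¬ ∃ H : Subgroup (LatGrp n B), Group.IsNilpotent H ∧ H.FiniteIndex := by
  subst hn
  have hk0 : k ≠ 0 := Nat.one_le_iff_ne_zero.mp hk
  obtain ⟨B, hB⟩ := exists_generalLinearGroup_charpoly_eq_X_pow_two_mul_sub ℤ hk0
  have hcharpoly : (B.val.map (Int.cast : ℤ → ℂ)).charpoly = X ^ (2 * k) - (X ^ k + 1) := by
    simpa [hB] using B.val.charpoly_map (Int.castRingHom ℂ)
  have hpow {r : ℂ} (hr : (B.val.map (Int.cast : ℤ → ℂ)).charpoly.IsRoot r) :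
      r ^ (2 * k) = r ^ k + 1 := by
    simpa [hcharpoly, sub_eq_zero] using hr
  obtain ⟨r, hr⟩ : ∃ r, (B.val.map (Int.cast : ℤ → ℂ)).charpoly.IsRoot r :=
    IsAlgClosed.exists_root _ (by simp [charpoly_degree_eq_dim, hk0])
  have hnorm : ‖r‖ ≠ 1 := norm_ne_one_of_pow_two_mul_eq_pow_add_one (hpow hr)
  have hbound : (2 / (2 * k : ℕ) : ℝ) = 1 / k := by
    push_cast
    field_simp
  refine ⟨B, fun s hs => hbound ▸ abs_log_norm_lt_one_div hk0 (hpow hs), ⟨r, hr, hnorm⟩, ?_⟩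
  exact fun hvirt => hnorm (LatGrp.norm_eq_one_of_isVirtuallyNilpotent hvirt hr)
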